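/- Let k be a field of characteristic zero, Ω an alphabet with a commutative associative operation Θ, and H_W the free k-vector space on words over Ω. Define the linear map êxp : H_W → H_W by êxp(∅) = ∅ and, for a word w = b_1···b_n of length n, êxp(w) = Σ_{(j_1,...,j_l) composition of n} (1/(j_1!···j_l!)) Θ(b_1,...,b_{j_1})·Θ(b_{j_1+1},...,b_{j_1+j_2})···Θ(b_{n−j_l+1},...,b_n), where Θ(a) = a and Θ(a_1,...,a_m) denotes the iterated Θ-product of the letters and the juxtaposition denotes concatenation of the resulting letters. Then êxp is an isomorphism of Hopf algebras from the shuffle Hopf algebra (H_W, ⧢, ∅, Δ, δ_∅) to the quasi-shuffle Hopf algebra (H_W, ⧢_Θ, ∅, Δ, δ_∅). -/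

import Mathlib

open scoped TensorProduct
noncomputable section

variable (k : Type*) [Field k] {Ω : Type*}

/-- The vector space of words over the alphabet `Ω`. -/
abbrev HW (k : Type*) [Field k] (Ω : Type*) := List Ω →₀ k

/-- Shuffle product of two words. -/
def shW : List Ω → List Ω → HW k Ω
  | [], v => Finsupp.single v 1
  | u, [] => Finsupp.single u 1
  | a :: u, b :: v =>
      Finsupp.mapDomain (a :: ·) (shW u (b :: v)) +
      Finsupp.mapDomain (b :: ·) (shW (a :: u) v)
  termination_by u v => u.length + v.length

/-- Quasi-shuffle product of two words. -/
def qshW (Θ : Ω → Ω → Ω) : List Ω → List Ω → HW k Ω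
  | [], v => Finsupp.single v 1
  | u, [] => Finsupp.single u 1
  | a :: u, b :: v =>
      Finsupp.mapDomain (a :: ·) (qshW Θ u (b :: v)) +
      Finsupp.mapDomain (b :: ·) (qshW Θ (a :: u) v) +
      Finsupp.mapDomain (Θ a b :: ·) (qshW Θ u v)
  termination_by u v => u.length + v.length

/-- Bilinear extension of the shuffle product. -/
def shL : HW k Ω →ₗ[k] HW k Ω →ₗ[k] HW k Ω :=
  Finsupp.lift (HW k Ω →ₗ[k] HW k Ω) k (List Ω) fun u =>
    Finsupp.lift (HW k Ω) k (List Ω) fun v => shW k u v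

/-- Bilinear extension of the quasi-shuffle product. -/
def qshL (Θ : Ω → Ω → Ω) : HW k Ω →ₗ[k] HW k Ω →ₗ[k] HW k Ω :=
  Finsupp.lift (HW k Ω →ₗ[k] HW k Ω) k (List Ω) fun u =>
    Finsupp.lift (HW k Ω) k (List Ω) fun v => qshW k Θ u v

/-- Deconcatenation coproduct `Δ(w) = Σ_{uv = w} v ⊗ u`. -/
def deconcat : HW k Ω →ₗ[k] HW k Ω ⊗[k] HW k Ω :=
  Finsupp.lift (HW k Ω ⊗[k] HW k Ω) k (List Ω) fun w =>
    ∑ i ∈ Finset.range (w.length + 1),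
      Finsupp.single (w.drop i) (1 : k) ⊗ₜ[k] Finsupp.single (w.take i) (1 : k)

/-- The counit `δ_∅`: indicator of the empty word. -/
def counitW : HW k Ω →ₗ[k] k :=
  Finsupp.lift k k (List Ω) fun w => match w with | [] => 1 | _ => 0

/-- The iterated `Θ`-product of the letters of a (nonempty) block:
`Θ(a_1,…,a_m)`; on a single letter it is that letter. -/
def contract [Inhabited Ω] (Θ : Ω → Ω → Ω) : List Ω → Ω
  | [] => default
  | a :: t => t.foldl Θ a

/-- Hoffman's exponential on a basis word `w = b_1 ⋯ b_n`:
`êxp(w) = Σ_{(j_1,…,j_l) composition of n} (1/(j_1!⋯j_l!)) Θ(b_1,…,b_{j_1}) ⋯ Θ(b_{n-j_l+1},…,b_n)`. -/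
def expW [Inhabited Ω] (Θ : Ω → Ω → Ω) (w : List Ω) : HW k Ω :=
  ∑ c : Composition w.length,
    ((c.blocks.map Nat.factorial).prod : k)⁻¹ •
      Finsupp.single ((w.splitWrtComposition c).map (contract Θ)) 1

/-- The linear extension `êxp : H_W → H_W` of Hoffman's exponential. -/
def expL [Inhabited Ω] (Θ : Ω → Ω → Ω) : HW k Ω →ₗ[k] HW k Ω :=
  Finsupp.lift (HW k Ω) k (List Ω) fun w => expW k Θ w


open Finsupp

section SplitSum

variable {M N : Type*} [AddCommMonoid M] [AddCommMonoid N]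

/-- The sum of `f p q` over all factorizations `p ++ q` of a word. -/
def splitSum (f : List Ω → List Ω → M) : List Ω → M
  | [] => f [] []
  | a :: w => f [] (a :: w) + splitSum (fun p => f (a :: p)) w

theorem splitSum_eq_sum_range (f : List Ω → List Ω → M) (w : List Ω) :
    splitSum f w = ∑ i ∈ Finset.range (w.length + 1), f (w.take i) (w.drop i) := by
  induction w generalizing f with
  | nil => simp [splitSum]
  | cons a w ih =>
    rw [splitSum, ih, List.length_cons, Finset.sum_range_succ' _ (w.length + 1), add_comm]
    simp

theorem splitSum_congr {f g : List Ω → List Ω → M} (w : List Ω)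
    (h : ∀ p q, p ++ q = w → f p q = g p q) : splitSum f w = splitSum g w := by
  simp only [splitSum_eq_sum_range]
  exact Finset.sum_congr rfl fun i _ => h _ _ (List.take_append_drop i w)

theorem splitSum_add (f g : List Ω → List Ω → M) (w : List Ω) :
    splitSum (fun p q => f p q + g p q) w = splitSum f w + splitSum g w := by
  simp only [splitSum_eq_sum_range, Finset.sum_add_distrib]

theorem splitSum_zero (w : List Ω) : splitSum (fun _ _ => (0 : M)) w = 0 := by
  simp [splitSum_eq_sum_range]

theorem map_splitSum {F : Type*} [FunLike F M N] [AddMonoidHomClass F M N] (T : F)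
    (f : List Ω → List Ω → M) (w : List Ω) :
    T (splitSum f w) = splitSum (fun p q => T (f p q)) w := by
  simp only [splitSum_eq_sum_range, map_sum]

theorem splitSum_comm (f : List Ω → List Ω → List Ω → List Ω → M) (u v : List Ω) :
    splitSum (fun p q => splitSum (f p q) v) u =
      splitSum (fun p' q' => splitSum (fun p q => f p q p' q') u) v := by
  simp only [splitSum_eq_sum_range]
  exact Finset.sum_comm

theorem splitSum_assoc (f : List Ω → List Ω → List Ω → M) (w : List Ω) :
    splitSum (fun p q => splitSum (f p) q) w =
      splitSum (fun r t => splitSum (fun p s => f p s t) r) w := by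
  induction w generalizing f with
  | nil => simp [splitSum]
  | cons a w ih =>
    simp only [splitSum, splitSum_add]
    rw [ih fun p => f (a :: p), add_assoc]

theorem splitSum_mem {R : Type*} [Semiring R] [Module R M] (S : Submodule R M)
    {f : List Ω → List Ω → M} (w : List Ω) (h : ∀ p q, p ++ q = w → f p q ∈ S) :
    splitSum f w ∈ S := by
  rw [splitSum_eq_sum_range]
  exact S.sum_mem fun i _ => h _ _ (List.take_append_drop i w)

end SplitSum

section Composition

theorem sum_composition_succ {M : Type*} [AddCommMonoid M] (n : ℕ) (F : List ℕ → M) :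
    ∑ c : Composition (n + 1), F c.blocks =
      ∑ i ∈ Finset.range (n + 1), ∑ c : Composition (n - i), F ((i + 1) :: c.blocks) := by
  rw [Finset.sum_range fun i => ∑ c : Composition (n - i), F ((i + 1) :: c.blocks),
    ← Fintype.sum_sigma']
  symm
  refine Fintype.sum_bijective
    (fun x : (i : Fin (n + 1)) × Composition (n - i) =>
      (⟨(x.1 + 1) :: x.2.blocks, by
          intro j hj
          rcases List.mem_cons.1 hj with rfl | hj
          · omega
          · exact x.2.blocks_pos hj, by
          have := x.1.2
          simp only [List.sum_cons, x.2.blocks_sum]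
          omega⟩ : Composition (n + 1))) ⟨?_, ?_⟩ _ _ fun _ => rfl
  · rintro ⟨i, c⟩ ⟨j, d⟩ h
    have h := congrArg Composition.blocks h
    simp only [List.cons.injEq, Nat.add_right_cancel_iff] at h
    obtain rfl := Fin.ext h.1
    obtain rfl := Composition.ext h.2
    rfl
  · rintro ⟨_ | ⟨_ | i, l⟩, hpos, hsum⟩
    · simp at hsum
    · exact absurd (hpos (List.mem_cons_self ..)) (lt_irrefl 0)
    · simp only [List.sum_cons] at hsum
      exact ⟨⟨⟨i, by omega⟩, ⟨l, fun h => hpos (List.mem_cons_of_mem _ h), by simp; omega⟩⟩, rfl⟩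

end Composition

/-- The component of a word along the empty word. -/
def emptyPart : List Ω → HW k Ω
  | [] => single [] 1
  | _ :: _ => 0

/-- Contraction of a nonempty block `p`, weighted by `1 / |p|!`, prepended as a letter;
zero on the empty block. -/
def consBlock [Inhabited Ω] (Θ : Ω → Ω → Ω) : List Ω → HW k Ω →ₗ[k] HW k Ω
  | [] => 0
  | a :: p => ((p.length + 1).factorial : k)⁻¹ • lmapDomain k k (contract Θ (a :: p) :: ·)

section Exp

variable [Inhabited Ω] (Θ : Ω → Ω → Ω)

theorem expW_nil : expW k Θ [] = single [] 1 := by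
  have (c : Composition ([] : List Ω).length) : c.blocks = [] := by simp [c.blocks_eq_nil]
  simp [expW, List.splitWrtComposition, List.splitWrtCompositionAux, this, composition_card]

theorem expW_eq (w : List Ω) :
    expW k Θ w = emptyPart k w + splitSum (fun p q => consBlock k Θ p (expW k Θ q)) w := by
  cases w with
  | nil => simp [expW_nil, emptyPart, splitSum, consBlock]
  | cons a w =>
    rw [splitSum, splitSum_eq_sum_range]
    simp only [emptyPart, consBlock, LinearMap.zero_apply, zero_add]
    have := sum_composition_succ w.length fun l =>
      ((l.map Nat.factorial).prod : k)⁻¹ •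
        single (((a :: w).splitWrtCompositionAux l).map (contract Θ)) (1 : k)
    simp only [expW, List.splitWrtComposition]
    refine this.trans (Finset.sum_congr rfl fun i hi => ?_)
    have hi : i ≤ w.length := Nat.lt_succ_iff.1 (Finset.mem_range.1 hi)
    rw [List.length_drop, map_sum]
    refine Finset.sum_congr rfl fun c _ => ?_
    simp [List.splitWrtCompositionAux, hi, mul_comm]

theorem expL_single (w : List Ω) : expL k Θ (single w 1) = expW k Θ w := by
  simp [expL]

end Exp

section Bijective

variable (Ω) in
/-- The span of the words of length less than `n`. -/
def shortWords (n : ℕ) : Submodule k (HW k Ω) :=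
  supported k k {w : List Ω | w.length < n}

theorem shortWords_mono {m n : ℕ} (h : m ≤ n) : shortWords k Ω m ≤ shortWords k Ω n :=
  supported_mono fun _ hw => lt_of_lt_of_le hw h

variable {k}

theorem exists_mem_shortWords (x : HW k Ω) : ∃ n, x ∈ shortWords k Ω n := by
  refine ⟨x.support.sup List.length + 1, fun w hw => ?_⟩
  exact Nat.lt_succ_of_le (Finset.le_sup (f := List.length) hw)

theorem lmapDomain_cons_mem_shortWords (a : Ω) {x : HW k Ω} {n : ℕ} (hx : x ∈ shortWords k Ω n) :
    lmapDomain k k (a :: ·) x ∈ shortWords k Ω (n + 1) := by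
  have h := Submodule.mem_map_of_mem (f := lmapDomain k k (a :: ·)) hx
  rw [shortWords, lmapDomain_supported] at h
  refine supported_mono ?_ h
  rintro _ ⟨w, hw, rfl⟩
  exact Nat.succ_lt_succ hw

variable [Inhabited Ω] (Θ : Ω → Ω → Ω)

theorem consBlock_mem_shortWords (p : List Ω) {x : HW k Ω} {n : ℕ}
    (hx : x ∈ shortWords k Ω n) : consBlock k Θ p x ∈ shortWords k Ω (n + 1) := by
  cases p with
  | nil => exact zero_mem _
  | cons a p => exact Submodule.smul_mem _ _ (lmapDomain_cons_mem_shortWords _ hx)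

variable (k)

theorem expW_mem_shortWords (w : List Ω) : expW k Θ w ∈ shortWords k Ω (w.length + 1) := by
  induction h : w.length using Nat.strong_induction_on generalizing w with
  | _ n ih =>
    rw [expW_eq]
    refine add_mem ?_ (splitSum_mem _ _ fun p q hpq => ?_)
    · cases w with
      | nil => exact single_mem_supported k _ (by simp)
      | cons a w => exact zero_mem _
    · cases p with
      | nil => exact zero_mem _
      | cons a p =>
        have hq : q.length < n := by simp [← h, ← hpq]
        exact shortWords_mono k (Nat.succ_le_succ hq) (consBlock_mem_shortWords Θ _ (ih _ hq q rfl))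

theorem expW_sub_single_mem_shortWords (w : List Ω) :
    expW k Θ w - single w 1 ∈ shortWords k Ω w.length := by
  induction w with
  | nil => simp [expW_nil]
  | cons a w ih =>
    have hcons : consBlock k Θ [a] (expW k Θ w) - single (a :: w) 1 ∈
        shortWords k Ω (w.length + 1) := by
      have := lmapDomain_cons_mem_shortWords a ih
      rw [map_sub, lmapDomain_apply, lmapDomain_apply, mapDomain_single] at this
      simpa [consBlock, contract] using this
    rw [expW_eq, emptyPart, zero_add, splitSum]
    simp only [consBlock.eq_1, LinearMap.zero_apply, zero_add]
    cases w with
    | nil => exact hcons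
    | cons b w =>
      rw [splitSum, add_sub_right_comm]
      refine add_mem hcons (splitSum_mem _ _ fun p q hpq => ?_)
      refine shortWords_mono k ?_ (consBlock_mem_shortWords Θ _ (expW_mem_shortWords k Θ q))
      rw [← hpq]
      simp

variable {k}

theorem expL_sub_self_mem_shortWords {x : HW k Ω} {n : ℕ} (hx : x ∈ shortWords k Ω (n + 1)) :
    expL k Θ x - x ∈ shortWords k Ω n := by
  have h : x = ∑ w ∈ x.support, x w • single w (1 : k) := by
    conv_lhs => rw [← x.sum_single]
    simp [Finsupp.sum]
  have h' : expL k Θ x - x = ∑ w ∈ x.support, x w • (expW k Θ w - single w 1) := by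
    conv_lhs => rw [h]
    simp only [map_sum, map_smul, expL_single, smul_sub, Finset.sum_sub_distrib]
  rw [h']
  exact sum_mem fun w hw => Submodule.smul_mem _ _ <|
    shortWords_mono k (Nat.lt_succ_iff.1 (hx hw)) (expW_sub_single_mem_shortWords k Θ w)

theorem expL_bijective : Function.Bijective (expL k Θ) := by
  constructor
  · rw [injective_iff_map_eq_zero]
    intro x hx
    obtain ⟨n, hn⟩ := exists_mem_shortWords x
    induction n with
    | zero => simpa [shortWords] using hn
    | succ n ih => exact ih (by simpa [hx] using expL_sub_self_mem_shortWords Θ hn)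
  · intro x
    obtain ⟨n, hn⟩ := exists_mem_shortWords x
    induction n generalizing x with
    | zero => exact ⟨0, by simpa [shortWords, eq_comm] using hn⟩
    | succ n ih =>
      obtain ⟨y, hy⟩ := ih _ (expL_sub_self_mem_shortWords Θ hn)
      exact ⟨x - y, by rw [map_sub, hy, sub_sub_cancel]⟩

end Bijective

section Coalgebra

theorem deconcat_single (w : List Ω) :
    deconcat k (single w 1) =
      splitSum (fun p q => (single q 1 : HW k Ω) ⊗ₜ[k] (single p 1 : HW k Ω)) w := by
  simp [deconcat, splitSum_eq_sum_range]

theorem deconcat_mapDomain_cons (a : Ω) (x : HW k Ω) :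
    deconcat k (mapDomain (a :: ·) x) =
      mapDomain (a :: ·) x ⊗ₜ[k] single [] 1 +
        (lmapDomain k k (a :: ·)).lTensor (HW k Ω) (deconcat k x) := by
  induction x using Finsupp.induction_linear with
  | zero => simp
  | add x y hx hy =>
    simp only [mapDomain_add, map_add, hx, hy, TensorProduct.add_tmul]
    abel
  | single w c =>
    have hc : single w c = c • single w (1 : k) := by simp
    rw [hc, mapDomain_smul, map_smul, map_smul, map_smul, ← TensorProduct.smul_tmul', ← smul_add,
      mapDomain_single, deconcat_single, deconcat_single, splitSum, map_splitSum]
    simp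

theorem deconcat_emptyPart (w : List Ω) :
    deconcat k (emptyPart k w) = emptyPart k w ⊗ₜ[k] single [] 1 := by
  cases w with
  | nil => rw [emptyPart, deconcat_single]; rfl
  | cons a w => simp [emptyPart]

theorem splitSum_tmul_emptyPart (f : List Ω → HW k Ω) (w : List Ω) :
    splitSum (fun p q => f q ⊗ₜ[k] emptyPart k p) w = f w ⊗ₜ[k] single [] 1 := by
  cases w with
  | nil => simp [splitSum, emptyPart]
  | cons a w => simp [splitSum, emptyPart, splitSum_zero]

theorem counitW_single_cons (a : Ω) (w : List Ω) (c : k) :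
    counitW k (single (a :: w) c) = 0 := by
  simp [counitW]

variable [Inhabited Ω] (Θ : Ω → Ω → Ω)

theorem deconcat_consBlock (p : List Ω) (x : HW k Ω) :
    deconcat k (consBlock k Θ p x) =
      consBlock k Θ p x ⊗ₜ[k] single [] 1 + (consBlock k Θ p).lTensor (HW k Ω) (deconcat k x) := by
  cases p with
  | nil => simp [consBlock]
  | cons a p =>
    simp only [consBlock, LinearMap.smul_apply, map_smul, lmapDomain_apply,
      deconcat_mapDomain_cons, LinearMap.lTensor_smul, smul_add, TensorProduct.smul_tmul']

theorem deconcat_expW (w : List Ω) :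
    deconcat k (expW k Θ w) = splitSum (fun p q => expW k Θ q ⊗ₜ[k] expW k Θ p) w := by
  induction h : w.length using Nat.strong_induction_on generalizing w with
  | _ n ih =>
    have hrec : splitSum (fun p q => (consBlock k Θ p).lTensor (HW k Ω)
        (deconcat k (expW k Θ q))) w =
        splitSum (fun p q => splitSum (fun r t =>
          expW k Θ t ⊗ₜ[k] consBlock k Θ p (expW k Θ r)) q) w := by
      refine splitSum_congr w fun p q hpq => ?_
      cases p with
      | nil => simp [consBlock, splitSum_zero]
      | cons a p =>
        rw [ih q.length (by simp [← h, ← hpq]) q rfl, map_splitSum]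
        simp
    have hR : splitSum (fun p q => expW k Θ q ⊗ₜ[k] expW k Θ p) w =
        expW k Θ w ⊗ₜ[k] single [] 1 + splitSum (fun p q => splitSum (fun r t =>
          expW k Θ t ⊗ₜ[k] consBlock k Θ p (expW k Θ r)) q) w := by
      rw [splitSum_assoc, ← splitSum_tmul_emptyPart, ← splitSum_add]
      refine splitSum_congr w fun p q _ => ?_
      conv_lhs => rw [expW_eq k Θ p, TensorProduct.tmul_add]
      congr 1
      exact map_splitSum (TensorProduct.mk k (HW k Ω) (HW k Ω) (expW k Θ q)) _ _
    have hL : splitSum (fun p q => consBlock k Θ p (expW k Θ q) ⊗ₜ[k] single ([] : List Ω) (1 : k))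
        w = splitSum (fun p q => consBlock k Θ p (expW k Θ q)) w ⊗ₜ[k] single [] 1 :=
      (map_splitSum ((TensorProduct.mk k (HW k Ω) (HW k Ω)).flip (single [] 1)) _ _).symm
    rw [hR, ← hrec, expW_eq k Θ w, map_add, deconcat_emptyPart, map_splitSum]
    simp only [deconcat_consBlock, splitSum_add]
    rw [hL, TensorProduct.add_tmul, add_assoc]

theorem deconcat_expL (x : HW k Ω) :
    deconcat k (expL k Θ x) = TensorProduct.map (expL k Θ) (expL k Θ) (deconcat k x) := by
  suffices deconcat k ∘ₗ expL k Θ = TensorProduct.map (expL k Θ) (expL k Θ) ∘ₗ deconcat k from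
    LinearMap.congr_fun this x
  ext w : 2
  simp [expL_single, deconcat_expW, deconcat_single, map_splitSum]

theorem counitW_consBlock (p : List Ω) (x : HW k Ω) : counitW k (consBlock k Θ p x) = 0 := by
  cases p with
  | nil => simp [consBlock]
  | cons a p =>
    induction x using Finsupp.induction_linear with
    | zero => simp
    | add x y hx hy => rw [map_add, map_add, hx, hy, add_zero]
    | single w c =>
      rw [consBlock, LinearMap.smul_apply, lmapDomain_apply, mapDomain_single, map_smul,
        counitW_single_cons, smul_zero]

theorem counitW_expL (x : HW k Ω) : counitW k (expL k Θ x) = counitW k x := by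
  suffices counitW k ∘ₗ expL k Θ = counitW k from LinearMap.congr_fun this x
  ext w
  simp only [LinearMap.comp_apply, lsingle_apply, expL_single]
  rw [expW_eq, map_add, map_splitSum]
  simp only [counitW_consBlock, splitSum_zero, add_zero]
  cases w with
  | nil => rfl
  | cons a w => rw [emptyPart, map_zero, counitW_single_cons]

end Coalgebra

section Shuffle

variable {M N : Type*} [AddCommGroup M] [Module k M] [AddCommGroup N] [Module k N]

/-- The sum of `f w` over all shuffles `w` of two words, counted with multiplicity. -/
def shuffleSum (f : List Ω → M) (u v : List Ω) : M :=
  linearCombination k f (shW k u v)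

theorem shW_nil_right (u : List Ω) : shW k u [] = single u 1 := by
  cases u <;> simp [shW]

theorem shuffleSum_nil_left (f : List Ω → M) (v : List Ω) : shuffleSum k f [] v = f v := by
  simp [shuffleSum, shW]

theorem shuffleSum_nil_right (f : List Ω → M) (u : List Ω) : shuffleSum k f u [] = f u := by
  simp [shuffleSum, shW_nil_right]

theorem shuffleSum_cons_cons (f : List Ω → M) (a b : Ω) (u v : List Ω) :
    shuffleSum k f (a :: u) (b :: v) =
      shuffleSum k (fun w => f (a :: w)) u (b :: v) +
        shuffleSum k (fun w => f (b :: w)) (a :: u) v := by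
  simp only [shuffleSum, shW, map_add, linearCombination_mapDomain]
  rfl

theorem shuffleSum_add (f g : List Ω → M) (u v : List Ω) :
    shuffleSum k (fun w => f w + g w) u v = shuffleSum k f u v + shuffleSum k g u v := by
  simp [shuffleSum, linearCombination_apply, smul_add, sum_add]

theorem shuffleSum_zero (u v : List Ω) : shuffleSum k (fun _ => (0 : M)) u v = 0 := by
  simp [shuffleSum, linearCombination_apply]

theorem map_shuffleSum (T : M →ₗ[k] N) (f : List Ω → M) (u v : List Ω) :
    T (shuffleSum k f u v) = shuffleSum k (fun w => T (f w)) u v := by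
  simp [shuffleSum, linearCombination_apply, map_finsuppSum]

theorem shuffleSum_splitSum (f : List Ω → List Ω → M) (u v : List Ω) :
    shuffleSum k (splitSum f) u v =
      splitSum (fun p q => splitSum (fun p' q' =>
        shuffleSum k (fun r => shuffleSum k (f r) q q') p p') v) u := by
  induction u generalizing f v with
  | nil => simp only [splitSum, shuffleSum_nil_left]
  | cons a u ihu =>
    induction v generalizing f with
    | nil => simp only [splitSum, shuffleSum_nil_right]
    | cons b v ihv =>
      rw [shuffleSum_cons_cons]
      simp only [splitSum, shuffleSum_add]
      rw [ihu fun p => f (a :: p), ihv fun p => f (b :: p)]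
      simp only [splitSum, splitSum_add, shuffleSum_nil_left, shuffleSum_nil_right,
        shuffleSum_cons_cons]
      abel

theorem shuffleSum_of_perm {f : List Ω → M} (hf : ∀ {w w' : List Ω}, w.Perm w' → f w = f w')
    (u v : List Ω) :
    shuffleSum k f u v = (u.length + v.length).choose u.length • f (u ++ v) := by
  induction u generalizing f v with
  | nil => simp [shuffleSum_nil_left]
  | cons a u ihu =>
    induction v generalizing f with
    | nil => simp [shuffleSum_nil_right]
    | cons b v ihv =>
      rw [shuffleSum_cons_cons, ihu fun h => hf (h.cons a), ihv fun h => hf (h.cons b),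
        hf (List.perm_middle (l₁ := a :: u)).symm, List.cons_append, ← add_smul]
      congr 1
      simp only [List.length_cons]
      rw [show u.length + 1 + (v.length + 1) = u.length + v.length + 1 + 1 by omega,
        Nat.choose_succ_succ, Nat.add_right_comm u.length 1, ← add_assoc]

end Shuffle

section Contract

variable [Inhabited Ω] {Θ : Ω → Ω → Ω}

theorem contract_perm (hcomm : ∀ a b : Ω, Θ a b = Θ b a)
    (hassoc : ∀ a b c : Ω, Θ (Θ a b) c = Θ a (Θ b c)) {w w' : List Ω} (h : w.Perm w') :
    contract Θ w = contract Θ w' := by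
  have : RightCommutative Θ := ⟨fun a b c => by rw [hassoc, hcomm b, hassoc]⟩
  induction h with
  | nil => rfl
  | cons a h => exact h.foldl_eq _
  | swap a b l => simp [contract, hcomm]
  | trans _ _ h₁ h₂ => exact h₁.trans h₂

theorem contract_append (hassoc : ∀ a b c : Ω, Θ (Θ a b) c = Θ a (Θ b c)) (a b : Ω)
    (p q : List Ω) :
    contract Θ ((a :: p) ++ (b :: q)) = Θ (contract Θ (a :: p)) (contract Θ (b :: q)) := by
  have : Std.Associative Θ := ⟨hassoc⟩
  simp [contract, List.foldl_assoc]

theorem consBlock_perm (hcomm : ∀ a b : Ω, Θ a b = Θ b a)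
    (hassoc : ∀ a b c : Ω, Θ (Θ a b) c = Θ a (Θ b c)) {w w' : List Ω} (h : w.Perm w') :
    consBlock k Θ w = consBlock k Θ w' := by
  rcases w with _ | ⟨a, w⟩
  · rw [h.nil_eq]
  · rcases w' with _ | ⟨b, w'⟩
    · exact absurd h (by simp)
    · have := h.length_eq
      simp only [List.length_cons, Nat.add_right_cancel_iff] at this
      rw [consBlock, consBlock, contract_perm hcomm hassoc h, this]

theorem consBlock_append [CharZero k] (hassoc : ∀ a b c : Ω, Θ (Θ a b) c = Θ a (Θ b c)) (a b : Ω)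
    (p q : List Ω) :
    ((a :: p).length + (b :: q).length).choose (a :: p).length •
        consBlock k Θ ((a :: p) ++ (b :: q)) =
      (((p.length + 1).factorial : k)⁻¹ * ((q.length + 1).factorial : k)⁻¹) •
        lmapDomain k k (Θ (contract Θ (a :: p)) (contract Θ (b :: q)) :: ·) := by
  rw [List.cons_append, consBlock, ← List.cons_append, contract_append hassoc,
    ← Nat.cast_smul_eq_nsmul k, smul_smul]
  congr 1
  have h := Nat.add_choose_mul_factorial_mul_factorial (p.length + 1) (q.length + 1)
  rw [← Nat.choose_symm_add] at h
  rw [List.length_append, List.length_cons, List.length_cons,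
    show p.length + (q.length + 1) + 1 = p.length + 1 + (q.length + 1) by omega, ← h]
  have h₁ : ((p.length + 1).factorial : k) ≠ 0 := Nat.cast_ne_zero.2 (Nat.factorial_ne_zero _)
  have h₂ : ((q.length + 1).factorial : k) ≠ 0 := Nat.cast_ne_zero.2 (Nat.factorial_ne_zero _)
  have h₃ : ((p.length + 1 + (q.length + 1)).choose (p.length + 1) : k) ≠ 0 :=
    Nat.cast_ne_zero.2 (Nat.choose_pos (by omega)).ne'
  push_cast
  field_simp

end Contract

section Algebra

variable (Θ : Ω → Ω → Ω)

theorem shL_single (u v : List Ω) : shL k (single u 1) (single v 1) = shW k u v := by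
  simp [shL]

theorem qshL_single (u v : List Ω) : qshL k Θ (single u 1) (single v 1) = qshW k Θ u v := by
  simp [qshL]

theorem qshL_nil_left (x : HW k Ω) : qshL k Θ (single [] 1) x = x := by
  suffices qshL k Θ (single [] 1) = LinearMap.id from LinearMap.congr_fun this x
  ext w : 2
  simp [qshL_single, qshW]

theorem qshL_nil_right (x : HW k Ω) : qshL k Θ x (single [] 1) = x := by
  suffices (qshL k Θ).flip (single [] 1) = LinearMap.id from LinearMap.congr_fun this x
  ext w : 2
  cases w <;> simp [qshL_single, qshW]

theorem qshL_cons_cons (a b : Ω) (x y : HW k Ω) :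
    qshL k Θ (lmapDomain k k (a :: ·) x) (lmapDomain k k (b :: ·) y) =
      lmapDomain k k (a :: ·) (qshL k Θ x (lmapDomain k k (b :: ·) y)) +
      lmapDomain k k (b :: ·) (qshL k Θ (lmapDomain k k (a :: ·) x) y) +
      lmapDomain k k (Θ a b :: ·) (qshL k Θ x y) := by
  suffices (qshL k Θ).compl₁₂ (lmapDomain k k (a :: ·)) (lmapDomain k k (b :: ·)) =
      ((qshL k Θ).compl₂ (lmapDomain k k (b :: ·))).compr₂ (lmapDomain k k (a :: ·)) +
      ((qshL k Θ).comp (lmapDomain k k (a :: ·))).compr₂ (lmapDomain k k (b :: ·)) +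
      (qshL k Θ).compr₂ (lmapDomain k k (Θ a b :: ·)) from LinearMap.congr_fun₂ this x y
  ext u v : 4
  simp [qshL_single, qshW]

theorem shuffleSum_emptyPart_of_ne_nil {u v : List Ω} (h : u ≠ [] ∨ v ≠ []) :
    shuffleSum k (emptyPart k) u v = 0 := by
  rcases u with _ | ⟨a, u⟩ <;> rcases v with _ | ⟨b, v⟩ <;>
    simp_all [shuffleSum_nil_left, shuffleSum_nil_right, shuffleSum_cons_cons, emptyPart,
      shuffleSum_zero]

variable [Inhabited Ω]

/-- The recursion, by first blocks of both words, that determines the image under `êxp` of the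
shuffle product of two words. -/
def IsShuffleExp (F : List Ω → List Ω → HW k Ω) : Prop :=
  ∀ u v, F u v = shuffleSum k (emptyPart k) u v +
    splitSum (fun p q => splitSum (fun p' q' =>
      (p.length + p'.length).choose p.length • consBlock k Θ (p ++ p') (F q q')) v) u

variable {k Θ}

theorem IsShuffleExp.eq {F G : List Ω → List Ω → HW k Ω} (hF : IsShuffleExp k Θ F)
    (hG : IsShuffleExp k Θ G) (u v : List Ω) : F u v = G u v := by
  induction h : u.length + v.length using Nat.strong_induction_on generalizing u v with
  | _ n ih =>
    rw [hF, hG]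
    congr 1
    refine splitSum_congr u fun p q hpq => splitSum_congr v fun p' q' hpq' => ?_
    rcases hp : p ++ p' with _ | ⟨a, r⟩
    · simp [consBlock]
    · have h₁ := congrArg List.length hp
      have h₂ := congrArg List.length hpq
      have h₃ := congrArg List.length hpq'
      simp only [List.length_append, List.length_cons] at h₁ h₂ h₃
      rw [ih _ (by omega) q q' rfl]

theorem isShuffleExp_shuffle (hcomm : ∀ a b : Ω, Θ a b = Θ b a)
    (hassoc : ∀ a b c : Ω, Θ (Θ a b) c = Θ a (Θ b c)) :
    IsShuffleExp k Θ (shuffleSum k (expW k Θ)) := by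
  intro u v
  have h : expW k Θ = fun w => emptyPart k w +
      splitSum (fun p q => consBlock k Θ p (expW k Θ q)) w := funext (expW_eq k Θ)
  conv_lhs => rw [h]
  rw [shuffleSum_add, shuffleSum_splitSum]
  congr 1
  refine splitSum_congr u fun p q _ => splitSum_congr v fun p' q' _ => ?_
  simp only [← map_shuffleSum]
  exact shuffleSum_of_perm k
    (fun h => by rw [consBlock_perm k hcomm hassoc h]) p p'

theorem expW_cons (a : Ω) (w : List Ω) :
    expW k Θ (a :: w) = splitSum (fun p q => consBlock k Θ (a :: p) (expW k Θ q)) w := by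
  rw [expW_eq, splitSum, emptyPart, consBlock.eq_1]
  simp

theorem qshL_consBlock [CharZero k] (hassoc : ∀ a b c : Ω, Θ (Θ a b) c = Θ a (Θ b c)) (a b : Ω)
    (p p' : List Ω) (x y : HW k Ω) :
    qshL k Θ (consBlock k Θ (a :: p) x) (consBlock k Θ (b :: p') y) =
      consBlock k Θ (a :: p) (qshL k Θ x (consBlock k Θ (b :: p') y)) +
      consBlock k Θ (b :: p') (qshL k Θ (consBlock k Θ (a :: p) x) y) +
      ((a :: p).length + (b :: p').length).choose (a :: p).length •
        consBlock k Θ ((a :: p) ++ (b :: p')) (qshL k Θ x y) := by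
  rw [← LinearMap.smul_apply, consBlock_append k hassoc]
  simp only [consBlock, LinearMap.smul_apply, map_smul, qshL_cons_cons, smul_add, smul_smul]
  simp only [mul_comm]

theorem isShuffleExp_quasiShuffle [CharZero k]
    (hassoc : ∀ a b c : Ω, Θ (Θ a b) c = Θ a (Θ b c)) :
    IsShuffleExp k Θ (fun u v => qshL k Θ (expW k Θ u) (expW k Θ v)) := by
  intro u v
  rcases u with _ | ⟨a, u⟩
  · simp only [shuffleSum_nil_left, splitSum, expW_nil, qshL_nil_left]
    simpa using expW_eq k Θ v
  rcases v with _ | ⟨b, v⟩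
  · simp only [shuffleSum_nil_right, splitSum, expW_nil, qshL_nil_right]
    simpa [splitSum] using expW_eq k Θ (a :: u)
  rw [shuffleSum_emptyPart_of_ne_nil k (by simp), zero_add]
  have hu (y : HW k Ω) : qshL k Θ (expW k Θ (a :: u)) y =
      splitSum (fun p q => qshL k Θ (consBlock k Θ (a :: p) (expW k Θ q)) y) u := by
    rw [expW_cons]
    exact map_splitSum ((qshL k Θ).flip y) _ _
  have hv (x : HW k Ω) : qshL k Θ x (expW k Θ (b :: v)) =
      splitSum (fun p q => qshL k Θ x (consBlock k Θ (b :: p) (expW k Θ q))) v := by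
    rw [expW_cons, map_splitSum]
  have h₁ : splitSum (fun p q => splitSum (fun p' q' => consBlock k Θ (a :: p)
      (qshL k Θ (expW k Θ q) (consBlock k Θ (b :: p') (expW k Θ q')))) v) u =
      splitSum (fun p q => consBlock k Θ (a :: p)
        (qshL k Θ (expW k Θ q) (expW k Θ (b :: v)))) u := by
    simp only [hv, map_splitSum]
  have h₂ : splitSum (fun p q => splitSum (fun p' q' => consBlock k Θ (b :: p')
      (qshL k Θ (consBlock k Θ (a :: p) (expW k Θ q)) (expW k Θ q'))) v) u =
      splitSum (fun p' q' => consBlock k Θ (b :: p')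
        (qshL k Θ (expW k Θ (a :: u)) (expW k Θ q'))) v := by
    rw [splitSum_comm]
    simp only [hu, map_splitSum]
  have h₃ : qshL k Θ (expW k Θ (a :: u)) (expW k Θ (b :: v)) =
      splitSum (fun p q => consBlock k Θ (a :: p)
        (qshL k Θ (expW k Θ q) (expW k Θ (b :: v)))) u +
      splitSum (fun p' q' => consBlock k Θ (b :: p')
        (qshL k Θ (expW k Θ (a :: u)) (expW k Θ q'))) v +
      splitSum (fun p q => splitSum (fun p' q' =>
        ((a :: p).length + (b :: p').length).choose (a :: p).length •
          consBlock k Θ ((a :: p) ++ (b :: p')) (qshL k Θ (expW k Θ q) (expW k Θ q'))) v) u := by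
    rw [hu, ← h₁, ← h₂, ← splitSum_add, ← splitSum_add]
    refine splitSum_congr u fun p q _ => ?_
    rw [hv, ← splitSum_add, ← splitSum_add]
    exact splitSum_congr v fun p' q' _ => qshL_consBlock hassoc a b p p' _ _
  simp only [splitSum, splitSum_add, List.nil_append, List.append_nil, consBlock.eq_1,
    LinearMap.zero_apply, smul_zero, zero_add, List.length_nil, add_zero, Nat.choose_zero_right,
    Nat.choose_self, one_smul]
  rw [h₃]
  abel

theorem expL_shL [CharZero k] (hcomm : ∀ a b : Ω, Θ a b = Θ b a)
    (hassoc : ∀ a b c : Ω, Θ (Θ a b) c = Θ a (Θ b c)) (x y : HW k Ω) :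
    expL k Θ (shL k x y) = qshL k Θ (expL k Θ x) (expL k Θ y) := by
  suffices (shL k).compr₂ (expL k Θ) = (qshL k Θ).compl₁₂ (expL k Θ) (expL k Θ) from
    LinearMap.congr_fun₂ this x y
  ext u v : 4
  have h : expL k Θ (shW k u v) = shuffleSum k (expW k Θ) u v := by
    simp [expL, shuffleSum, linearCombination_apply]
  simpa [shL_single, expL_single, h] using
    (isShuffleExp_shuffle hcomm hassoc).eq (isShuffleExp_quasiShuffle hassoc) u v

end Algebra

/-- **Hoffman's isomorphism.**  Over a field `k` of characteristic zero and for a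
commutative associative operation `Θ` on the alphabet, the map `êxp` is an
isomorphism of Hopf algebras from the shuffle Hopf algebra
`(H_W, ⧢, ∅, Δ, δ_∅)` to the quasi-shuffle Hopf algebra `(H_W, ⧢_Θ, ∅, Δ, δ_∅)`:
it is a linear bijection, sends the empty word to the empty word, intertwines the
shuffle and quasi-shuffle products, and commutes with the deconcatenation
coproduct and the counit. -/
theorem hoffman_exp_hopf_iso
    (k : Type*) [Field k] [CharZero k] (Ω : Type*) [Inhabited Ω]
    (Θ : Ω → Ω → Ω)
    (hcomm : ∀ a b : Ω, Θ a b = Θ b a)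
    (hassoc : ∀ a b c : Ω, Θ (Θ a b) c = Θ a (Θ b c)) :
    Function.Bijective (expL k Θ) ∧
    expL k Θ (Finsupp.single ([] : List Ω) (1 : k)) = Finsupp.single [] 1 ∧
    (∀ x y : HW k Ω, expL k Θ (shL k x y) = qshL k Θ (expL k Θ x) (expL k Θ y)) ∧
    (∀ x : HW k Ω,
      deconcat k (expL k Θ x) =
        TensorProduct.map (expL k Θ) (expL k Θ) (deconcat k x)) ∧
    (∀ x : HW k Ω, counitW k (expL k Θ x) = counitW k x) := by
  exact ⟨expL_bijective Θ, by rw [expL_single, expW_nil], expL_shL hcomm hassoc,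
    deconcat_expL k Θ, counitW_expL k Θ⟩
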